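/- For every integer ℓ ≥ 2, as u → ∞, the inverse function satisfies (Z_ℓ^{[ℓ]})^{−1}(u) ~ (u/K_ℓ)^{−1/ℓ}, i.e. the ratio of the two sides tends to 1. -/

import Mathlib

open Filter Topology Real MeasureTheory Asymptotics

noncomputable section

/-- Number of joint orbits of the subgroup generated by a tuple of permutations. -/
def kappa {ℓ n : ℕ} (σ : Fin ℓ → Equiv.Perm (Fin n)) : ℕ :=
  Nat.card (MulAction.orbitRel.Quotient (Subgroup.closure (Set.range σ)) (Fin n))

/-- `Acount ℓ n k` is the number of commuting `ℓ`-tuples of permutations of `{1,…,n}`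
with exactly `k` joint orbits. -/
def Acount (ℓ n k : ℕ) : ℕ :=
  Nat.card {σ : Fin ℓ → Equiv.Perm (Fin n) //
    (∀ i j, σ i * σ j = σ j * σ i) ∧ kappa σ = k}

/-- `Hpoly ℓ n x = (1/n!) ∑_k A(ℓ,n,k) x^k`. -/
def Hpoly (ℓ n : ℕ) (x : ℝ) : ℝ :=
  (1 / (n.factorial : ℝ)) * ∑ k ∈ Finset.range (n + 1), (Acount ℓ n k : ℝ) * x ^ k

/-- Expectation, under the Ewens-like measure `P_{ℓ,n,x}`, of `g(K_{ℓ,n})`. -/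
def expectK (ℓ n : ℕ) (x : ℝ) (g : ℕ → ℝ) : ℝ :=
  (∑ k ∈ Finset.range (n + 1), g k * (Acount ℓ n k : ℝ) * x ^ k) /
    (∑ k ∈ Finset.range (n + 1), (Acount ℓ n k : ℝ) * x ^ k)

/-- Mean of `K_{ℓ,n}` under `P_{ℓ,n,x}`. -/
def meanK (ℓ n : ℕ) (x : ℝ) : ℝ := expectK ℓ n x (fun k => (k : ℝ))

/-- Variance of `K_{ℓ,n}` under `P_{ℓ,n,x}`. -/
def varK (ℓ n : ℕ) (x : ℝ) : ℝ :=
  expectK ℓ n x (fun k => ((k : ℝ) - meanK ℓ n x) ^ 2)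

/-- Real Riemann zeta values (as a series), `zetaR s = ∑_{m ≥ 1} m^{-s}`. -/
def zetaR (s : ℝ) : ℝ := ∑' m : ℕ, 1 / ((m : ℝ) + 1) ^ s

/-- The constant `K_ℓ = (ℓ-1)! ζ(2)⋯ζ(ℓ)`. -/
def Kconst (ℓ : ℕ) : ℝ := ((ℓ - 1).factorial : ℝ) * ∏ j ∈ Finset.Icc 2 ℓ, zetaR (j : ℝ)

/-- The multiple series `Z^{[ℓ]}_{α_1,…,α_ℓ}(t)` with complex exponents. -/
def Zc (ℓ : ℕ) (α : Fin ℓ → ℂ) (t : ℝ) : ℂ :=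
  ∑' δ : Fin ℓ → ℕ+,
    (∏ i, ((δ i : ℕ) : ℂ) ^ (α i - 1)) *
      Complex.exp (-(((∏ i, ((δ i : ℕ) : ℝ)) * t : ℝ) : ℂ))

/-- The multiple series `Z^{[ℓ]}_{α_1,…,α_ℓ}(t)` with real exponents. -/
def Zr (ℓ : ℕ) (α : Fin ℓ → ℝ) (t : ℝ) : ℝ :=
  ∑' δ : Fin ℓ → ℕ+,
    (∏ i, ((δ i : ℕ) : ℝ) ^ (α i - 1)) *
      Real.exp (-(∏ i, ((δ i : ℕ) : ℝ)) * t)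

/-- The staircase series `Z_m^{[ℓ]}(t) = Z^{[ℓ]}_{m,m-1,…,m-ℓ+1}(t)`. -/
def Zstair (ℓ : ℕ) (m : ℤ) (t : ℝ) : ℝ :=
  Zr ℓ (fun i => (m : ℝ) - (i : ℕ)) t

/-- The inverse function `(Z_ℓ^{[ℓ]})^{-1} : (0,∞) → (0,∞)`. -/
def ZstairInv (ℓ : ℕ) (u : ℝ) : ℝ :=
  Function.invFunOn (Zstair ℓ ℓ) (Set.Ioi 0) u

/-- The function `q_{ℓ,n}(y,u,θ)` from the saddle point analysis. -/
def qfun (ℓ n : ℕ) (y u θ : ℝ) : ℂ :=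
  Complex.I * (n : ℂ) * (θ : ℂ) - (y : ℂ) * ∑' δ : Fin ℓ → ℕ+,
    (∏ i, ((δ i : ℕ) : ℂ) ^ ((ℓ : ℤ) - 2 - (i : ℕ))) *
      Complex.exp (-(((∏ i, ((δ i : ℕ) : ℝ)) * u : ℝ) : ℂ)) *
      (Complex.exp (Complex.I * (((∏ i, ((δ i : ℕ) : ℝ)) * θ : ℝ) : ℂ)) - 1)

/-- The normalizing sequence `b_n = ((x K_ℓ)^{1/(2ℓ)}/√(ℓ(ℓ-1))) n^{(ℓ-1)/(2ℓ)}`. -/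
def bseq (ℓ : ℕ) (x : ℝ) (n : ℕ) : ℝ :=
  (x * Kconst ℓ) ^ ((1 : ℝ) / (2 * (ℓ : ℝ))) / Real.sqrt ((ℓ : ℝ) * ((ℓ : ℝ) - 1)) *
    (n : ℝ) ^ (((ℓ : ℝ) - 1) / (2 * (ℓ : ℝ)))

/-- The sequence `x_n = x e^{s/b_n}`. -/
def xseq (ℓ : ℕ) (x s : ℝ) (n : ℕ) : ℝ := x * Real.exp (s / bseq ℓ x n)

/-- The saddle point sequence `t_n = (Z_ℓ^{[ℓ]})^{-1}(n/x)`. -/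
def tseq (ℓ : ℕ) (x : ℝ) (n : ℕ) : ℝ := ZstairInv ℓ ((n : ℝ) / x)

end

/-!
Single out the largest exponent `a = α p`. With `d` the tuple of the other summation variables and
`P = ∏ d j`, summing over the `p`-th variable first gives
`t ^ a * Z_α(t) = ∑_d (∏ j, d j ^ (-(a - α j + 1))) * R(P t)`, where
`R(s) = s * ∑_{n ≥ 1} (s n) ^ (a - 1) * exp (-(s n))` is a Riemann sum of mesh `s` for Euler's
integral `Γ(a)`. Since the integrand has an integrable antitone majorant, `R` is bounded on `(0, ∞)`
and tends to `Γ(a)` at `0`, so dominated convergence yields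
`t ^ a * Z_α(t) → Γ(a) * ∏ j, ζ(a - α j + 1)`. A continuous antitone function with such a power
blow-up at `0` is inverted asymptotically by solving `t ^ a * u = K` for `t`.
-/

noncomputable section

section RiemannSum

variable {E : Type*} [NormedAddCommGroup E] {g : ℝ → E} {h : ℝ → ℝ} {s : ℝ}

lemma norm_comp_mul_ceil_le (hh : AntitoneOn h (Set.Ioi 0))
    (hgh : ∀ x ∈ Set.Ioi 0, ‖g x‖ ≤ h x) (hs : 0 < s) {x : ℝ} (hx : 0 < x) :
    ‖g (s * ⌈s⁻¹ * x⌉₊)‖ ≤ h x := by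
  have hle : x ≤ s * ⌈s⁻¹ * x⌉₊ := by
    rw [← inv_mul_le_iff₀ hs]
    exact Nat.le_ceil _
  exact (hgh _ (hx.trans_le hle)).trans (hh hx (hx.trans_le hle) hle)

lemma aestronglyMeasurable_comp_mul_ceil (g : ℝ → E) (s : ℝ) (μ : Measure ℝ) :
    AEStronglyMeasurable (fun x => g (s * ⌈s⁻¹ * x⌉₊)) μ := by
  have hceil : Measurable fun x : ℝ => ⌈s⁻¹ * x⌉₊ := by fun_prop
  exact ((StronglyMeasurable.of_discrete (f := fun n : ℕ => g (s * n))).comp_measurable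
    hceil).aestronglyMeasurable

lemma integrableOn_comp_mul_ceil (hh : AntitoneOn h (Set.Ioi 0))
    (hh_int : IntegrableOn h (Set.Ioi 0)) (hgh : ∀ x ∈ Set.Ioi 0, ‖g x‖ ≤ h x) (hs : 0 < s) :
    IntegrableOn (fun x => g (s * ⌈s⁻¹ * x⌉₊)) (Set.Ioi 0) :=
  Integrable.mono' hh_int (aestronglyMeasurable_comp_mul_ceil g s _) <|
    (ae_restrict_iff' measurableSet_Ioi).2 <|
      .of_forall fun _ hx => norm_comp_mul_ceil_le hh hgh hs hx

variable [NormedSpace ℝ E]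

/-- The right-endpoint Riemann sum of mesh `s` for the improper integral of `g` over `(0, ∞)`. -/
def rightRiemannSum (g : ℝ → E) (s : ℝ) : E := s • ∑' n : ℕ+, g (s * (n : ℕ))

lemma iUnion_preimage_ceil_pnat :
    ⋃ n : ℕ+, (Nat.ceil : ℝ → ℕ) ⁻¹' {(n : ℕ)} = Set.Ioi 0 := by
  ext x
  simp only [Set.mem_iUnion, Set.mem_preimage, Set.mem_singleton_iff, Set.mem_Ioi]
  refine ⟨fun ⟨n, hn⟩ => Nat.ceil_pos.1 (hn ▸ n.pos), fun hx => ?_⟩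
  exact ⟨⟨⌈x⌉₊, Nat.ceil_pos.2 hx⟩, rfl⟩

variable [CompleteSpace E]

lemma integral_Ioi_comp_ceil {G : ℕ → E}
    (hG : IntegrableOn (fun x : ℝ => G ⌈x⌉₊) (Set.Ioi 0)) :
    ∫ x in Set.Ioi (0 : ℝ), G ⌈x⌉₊ = ∑' n : ℕ+, G n := by
  have measurableSet_fiber (n : ℕ+) : MeasurableSet ((Nat.ceil : ℝ → ℕ) ⁻¹' {(n : ℕ)}) :=
    Nat.measurable_ceil (measurableSet_singleton _)
  have integral_fiber (n : ℕ+) :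
      ∫ x in (Nat.ceil : ℝ → ℕ) ⁻¹' {(n : ℕ)}, G ⌈x⌉₊ = G n := by
    rw [setIntegral_congr_fun (g := fun _ => G n) (measurableSet_fiber n)
      (fun x (hx : ⌈x⌉₊ = n) => congrArg G hx), setIntegral_const,
      Nat.preimage_ceil_of_ne_zero n.ne_zero, Real.volume_real_Ioc, Nat.cast_pred n.pos]
    simp
  rw [← iUnion_preimage_ceil_pnat] at hG ⊢
  rw [integral_iUnion measurableSet_fiber
    (fun m n hmn => pairwise_disjoint_fiber _ (PNat.coe_injective.ne hmn)) hG]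
  exact tsum_congr integral_fiber

lemma rightRiemannSum_eq_integral (hs : 0 < s)
    (hg : IntegrableOn (fun x => g (s * ⌈s⁻¹ * x⌉₊)) (Set.Ioi 0)) :
    rightRiemannSum g s = ∫ x in Set.Ioi 0, g (s * ⌈s⁻¹ * x⌉₊) := by
  have hG := (integrableOn_Ioi_comp_mul_left_iff (fun x => g (s * ⌈x⌉₊)) 0 (inv_pos.2 hs)).1 hg
  rw [mul_zero] at hG
  rw [integral_comp_mul_left_Ioi (fun x => g (s * ⌈x⌉₊)) 0 (inv_pos.2 hs), mul_zero, inv_inv,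
    integral_Ioi_comp_ceil (G := fun n => g (s * n)) hG, rightRiemannSum]

lemma norm_rightRiemannSum_le (hh : AntitoneOn h (Set.Ioi 0))
    (hh_int : IntegrableOn h (Set.Ioi 0)) (hgh : ∀ x ∈ Set.Ioi 0, ‖g x‖ ≤ h x) (hs : 0 < s) :
    ‖rightRiemannSum g s‖ ≤ ∫ x in Set.Ioi 0, h x := by
  rw [rightRiemannSum_eq_integral hs (integrableOn_comp_mul_ceil hh hh_int hgh hs)]
  exact norm_integral_le_of_norm_le hh_int <| (ae_restrict_iff' measurableSet_Ioi).2 <|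
    .of_forall fun _ hx => norm_comp_mul_ceil_le hh hgh hs hx

lemma tendsto_mul_ceil_inv_mul {x : ℝ} (hx : 0 ≤ x) :
    Tendsto (fun s : ℝ => s * ⌈s⁻¹ * x⌉₊) (𝓝[>] 0) (𝓝 x) := by
  refine ((tendsto_nat_ceil_mul_div_atTop hx).comp tendsto_inv_nhdsGT_zero).congr fun s => ?_
  simp only [Function.comp_apply, div_inv_eq_mul, mul_comm]

lemma tendsto_rightRiemannSum (hg : ContinuousOn g (Set.Ioi 0)) (hh : AntitoneOn h (Set.Ioi 0))
    (hh_int : IntegrableOn h (Set.Ioi 0)) (hgh : ∀ x ∈ Set.Ioi 0, ‖g x‖ ≤ h x) :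
    Tendsto (rightRiemannSum g) (𝓝[>] 0) (𝓝 (∫ x in Set.Ioi 0, g x)) := by
  have hlim : Tendsto (fun s => ∫ x in Set.Ioi 0, g (s * ⌈s⁻¹ * x⌉₊)) (𝓝[>] 0)
      (𝓝 (∫ x in Set.Ioi 0, g x)) := by
    refine tendsto_integral_filter_of_dominated_convergence h
      (.of_forall fun s => aestronglyMeasurable_comp_mul_ceil g s _) ?_ hh_int ?_
    · filter_upwards [self_mem_nhdsWithin] with s hs
      exact (ae_restrict_iff' measurableSet_Ioi).2 <|
        .of_forall fun x hx => norm_comp_mul_ceil_le hh hgh hs hx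
    · refine (ae_restrict_iff' measurableSet_Ioi).2 <| .of_forall fun x (hx : 0 < x) => ?_
      exact (hg.continuousAt (Ioi_mem_nhds hx)).tendsto.comp (tendsto_mul_ceil_inv_mul hx.le)
  refine hlim.congr' ?_
  filter_upwards [self_mem_nhdsWithin] with s hs
  exact (rightRiemannSum_eq_integral hs (integrableOn_comp_mul_ceil hh hh_int hgh hs)).symm

end RiemannSum

section EulerIntegral

/-- The integrand of Euler's integral `Γ(a) = ∫_0^∞ exp (-x) * x ^ (a - 1) dx`. -/
def eulerIntegrand (a x : ℝ) : ℝ := exp (-x) * x ^ (a - 1)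

lemma rpow_mul_exp_neg_mul_le {b c x : ℝ} (hb : 0 < b) (hc : 0 ≤ c) (hx : 0 ≤ x) :
    x ^ c * exp (-(b * x)) ≤ (c / b) ^ c := by
  rcases hc.eq_or_lt with rfl | hc
  · simpa using mul_nonneg hb.le hx
  have hbase : x ≤ c / b * exp (b * x / c) := by
    have := (lt_add_one (b * x / c)).le.trans (add_one_le_exp (b * x / c))
    calc x = c / b * (b * x / c) := by field_simp
      _ ≤ c / b * exp (b * x / c) := by gcongr
  calc x ^ c * exp (-(b * x)) ≤ (c / b * exp (b * x / c)) ^ c * exp (-(b * x)) := by gcongr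
    _ = (c / b) ^ c := by
      rw [mul_rpow (by positivity) (exp_pos _).le, ← exp_mul, div_mul_cancel₀ _ hc.ne', mul_assoc,
        ← exp_add, add_neg_cancel, exp_zero, mul_one]

lemma antitoneOn_rpow_mul_exp_neg_mul {b c : ℝ} (hb : 0 ≤ b) (hc : c ≤ 0) :
    AntitoneOn (fun x : ℝ => x ^ c * exp (-b * x)) (Set.Ioi 0) := by
  intro x (hx : 0 < x) y _ hxy
  simp only [neg_mul]
  gcongr ?_ * exp (-(b * ?_))
  exact rpow_le_rpow_of_nonpos hx hxy hc

/-- The factor `x ^ (max a 1 - 1)` that may grow is absorbed into half of the exponential decay. -/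
lemma exists_antitoneOn_majorant_eulerIntegrand {a : ℝ} (ha : 0 < a) :
    ∃ h : ℝ → ℝ, AntitoneOn h (Set.Ioi 0) ∧ IntegrableOn h (Set.Ioi 0) ∧
      ∀ x ∈ Set.Ioi 0, ‖eulerIntegrand a x‖ ≤ h x := by
  set c := max a 1 - 1
  set e := min a 1 - 1
  have hc : 0 ≤ c := sub_nonneg.2 (le_max_right a 1)
  have he : e ≤ 0 := sub_nonpos.2 (min_le_right a 1)
  have hadd : a - 1 = c + e := by grind
  refine ⟨fun x => (c / (1 / 2)) ^ c * (x ^ e * exp (-(1 / 2) * x)),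
    fun x hx y hy hxy => ?_, ?_, fun x (hx : 0 < x) => ?_⟩
  · exact mul_le_mul_of_nonneg_left
      (antitoneOn_rpow_mul_exp_neg_mul (by norm_num) he hx hy hxy) (by positivity)
  · have he' : -1 < e := by grind
    simpa only [rpow_one, IntegrableOn] using (integrableOn_rpow_mul_exp_neg_mul_rpow he' one_pos
      one_half_pos).const_mul ((c / (1 / 2)) ^ c)
  · have hhalf : exp (-x) = exp (-(1 / 2 * x)) * exp (-(1 / 2) * x) := by
      rw [← exp_add]
      ring_nf
    rw [eulerIntegrand, norm_of_nonneg (by positivity), hadd, rpow_add hx, hhalf]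
    calc exp (-(1 / 2 * x)) * exp (-(1 / 2) * x) * (x ^ c * x ^ e)
        = x ^ c * exp (-(1 / 2 * x)) * (x ^ e * exp (-(1 / 2) * x)) := by ring
      _ ≤ (c / (1 / 2)) ^ c * (x ^ e * exp (-(1 / 2) * x)) := by
        gcongr
        exact rpow_mul_exp_neg_mul_le (by norm_num) hc hx.le

lemma exists_norm_rightRiemannSum_eulerIntegrand_le {a : ℝ} (ha : 0 < a) :
    ∃ M, ∀ s, 0 < s → ‖rightRiemannSum (eulerIntegrand a) s‖ ≤ M := by
  obtain ⟨h, hanti, hh_int, hle⟩ := exists_antitoneOn_majorant_eulerIntegrand ha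
  exact ⟨_, fun s hs => norm_rightRiemannSum_le hanti hh_int hle hs⟩

lemma tendsto_rightRiemannSum_eulerIntegrand {a : ℝ} (ha : 0 < a) :
    Tendsto (rightRiemannSum (eulerIntegrand a)) (𝓝[>] 0) (𝓝 (Gamma a)) := by
  obtain ⟨h, hanti, hh_int, hle⟩ := exists_antitoneOn_majorant_eulerIntegrand ha
  have hcont : ContinuousOn (eulerIntegrand a) (Set.Ioi 0) := fun x (hx : 0 < x) =>
    ((continuous_exp.comp continuous_neg).continuousAt.mul
      (continuousAt_rpow_const x _ (.inl hx.ne'))).continuousWithinAt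
  rw [Gamma_eq_integral ha]
  exact tendsto_rightRiemannSum hcont hanti hh_int hle

end EulerIntegral

section ProductSeries

lemma hasSum_mul_prod {β γ : Type*} {f : β → ℝ} {g : γ → ℝ} {x y : ℝ} (hf : HasSum f x)
    (hg : HasSum g y) : HasSum (fun z : β × γ => f z.1 * g z.2) (x * y) :=
  hf.mul hg (summable_mul_of_summable_norm hf.summable.norm hg.summable.norm)

lemma hasSum_prod_pi {β : Type*} {k : ℕ} {f : Fin k → β → ℝ} {a : Fin k → ℝ}
    (hf : ∀ j, HasSum (f j) (a j)) :
    HasSum (fun d : Fin k → β => ∏ j, f j (d j)) (∏ j, a j) := by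
  induction k with
  | zero => simp
  | succ k ih =>
    rw [← (Fin.consEquiv fun _ => β).hasSum_iff, Fin.prod_univ_succ]
    convert hasSum_mul_prod (hf 0) (ih fun j => hf j.succ) using 1
    ext x
    simp [Fin.consEquiv, Fin.prod_univ_succ]

lemma hasSum_pnat_rpow_neg {s : ℝ} (hs : 1 < s) :
    HasSum (fun n : ℕ+ => ((n : ℕ) : ℝ) ^ (-s)) (zetaR s) := by
  have hsum : Summable fun n : ℕ+ => ((n : ℕ) : ℝ) ^ (-s) :=
    (summable_nat_rpow.2 (neg_lt_neg hs)).comp_injective PNat.coe_injective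
  convert hsum.hasSum using 1
  rw [tsum_pnat_eq_tsum_succ (f := fun n : ℕ => (n : ℝ) ^ (-s)), zetaR]
  exact tsum_congr fun m => by rw [rpow_neg (by positivity), one_div, Nat.cast_succ]

lemma zetaR_pos {s : ℝ} (hs : 1 < s) : 0 < zetaR s :=
  (hasSum_pnat_rpow_neg hs).summable.tsum_pos (fun n => by positivity) 1 (by simp) |>.trans_eq
    (hasSum_pnat_rpow_neg hs).tsum_eq

lemma hasSum_prod_rpow_neg {k : ℕ} {σ : Fin k → ℝ} (hσ : ∀ j, 1 < σ j) :
    HasSum (fun d : Fin k → ℕ+ => ∏ j, ((d j : ℕ) : ℝ) ^ (-σ j)) (∏ j, zetaR (σ j)) :=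
  hasSum_prod_pi (f := fun j (n : ℕ+) => ((n : ℕ) : ℝ) ^ (-σ j))
    fun j => hasSum_pnat_rpow_neg (hσ j)

end ProductSeries

section MultipleSeries

/-- The summand of `Zr ℓ α t` at the index `δ`. -/
def ZrTerm {ℓ : ℕ} (α : Fin ℓ → ℝ) (t : ℝ) (δ : Fin ℓ → ℕ+) : ℝ :=
  (∏ i, ((δ i : ℕ) : ℝ) ^ (α i - 1)) * exp (-(∏ i, ((δ i : ℕ) : ℝ)) * t)

variable {ℓ : ℕ} (α : Fin ℓ → ℝ)

lemma ZrTerm_nonneg (t : ℝ) (δ : Fin ℓ → ℕ+) : 0 ≤ ZrTerm α t δ := by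
  unfold ZrTerm
  positivity

lemma antitone_ZrTerm (δ : Fin ℓ → ℕ+) : Antitone fun t => ZrTerm α t δ := by
  intro t₁ t₂ ht
  simp only [ZrTerm, neg_mul]
  gcongr

lemma exists_prod_rpow_sub_one_le :
    ∃ c : ℝ, 0 ≤ c ∧ ∀ δ : Fin ℓ → ℕ+, ∏ i, ((δ i : ℕ) : ℝ) ^ (α i - 1) ≤
      (∏ i, ((δ i : ℕ) : ℝ) ^ (-2 : ℝ)) * (∏ i, ((δ i : ℕ) : ℝ)) ^ c := by
  have hsum_nonneg : 0 ≤ ∑ i, |α i| := Finset.sum_nonneg fun i _ => abs_nonneg (α i)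
  refine ⟨∑ i, |α i| + 1, add_nonneg hsum_nonneg zero_le_one, fun δ => ?_⟩
  rw [← finsetProd_rpow _ _ fun i _ => by positivity, ← Finset.prod_mul_distrib]
  gcongr with i
  rw [← rpow_add (by exact_mod_cast (δ i).pos)]
  refine rpow_le_rpow_of_exponent_le (by exact_mod_cast one_le) ?_
  have hα : |α i| ≤ ∑ i, |α i| :=
    Finset.single_le_sum (fun j _ => abs_nonneg (α j)) (Finset.mem_univ i)
  linarith [le_abs_self (α i)]

lemma summable_ZrTerm {t : ℝ} (ht : 0 < t) : Summable (ZrTerm α t) := by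
  obtain ⟨c, hc, hle⟩ := exists_prod_rpow_sub_one_le α
  have hsum : Summable fun δ : Fin ℓ → ℕ+ => ∏ i, ((δ i : ℕ) : ℝ) ^ (-2 : ℝ) :=
    (hasSum_prod_rpow_neg (σ := fun _ => 2) fun _ => one_lt_two).summable
  refine (hsum.mul_right ((c / t) ^ c)).of_nonneg_of_le (ZrTerm_nonneg α t) fun δ => ?_
  have hP : 0 ≤ ∏ i, ((δ i : ℕ) : ℝ) := by positivity
  calc ZrTerm α t δ
      ≤ (∏ i, ((δ i : ℕ) : ℝ) ^ (-2 : ℝ)) * (∏ i, ((δ i : ℕ) : ℝ)) ^ c *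
          exp (-(∏ i, ((δ i : ℕ) : ℝ)) * t) := by
        unfold ZrTerm
        gcongr
        exact hle δ
    _ = (∏ i, ((δ i : ℕ) : ℝ) ^ (-2 : ℝ)) *
          ((∏ i, ((δ i : ℕ) : ℝ)) ^ c * exp (-(t * ∏ i, ((δ i : ℕ) : ℝ)))) := by
        rw [neg_mul, mul_comm t, mul_assoc]
    _ ≤ (∏ i, ((δ i : ℕ) : ℝ) ^ (-2 : ℝ)) * (c / t) ^ c := by
        gcongr
        exact rpow_mul_exp_neg_mul_le ht hc hP

lemma antitoneOn_Zr : AntitoneOn (Zr ℓ α) (Set.Ioi 0) := fun _ ht₁ _ ht₂ ht =>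
  (summable_ZrTerm α ht₂).tsum_le_tsum (fun δ => antitone_ZrTerm α δ ht) (summable_ZrTerm α ht₁)

lemma continuousOn_Zr : ContinuousOn (Zr ℓ α) (Set.Ioi 0) := by
  intro t (ht : 0 < t)
  have hcont : ContinuousOn (fun x => ∑' δ, ZrTerm α x δ) (Set.Ici (t / 2)) := by
    refine continuousOn_tsum (fun δ => ?_) (summable_ZrTerm α (half_pos ht)) fun δ x hx => ?_
    · unfold ZrTerm
      fun_prop
    · rw [norm_of_nonneg (ZrTerm_nonneg α x δ)]
      exact antitone_ZrTerm α δ hx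
  exact (hcont.continuousAt (Ici_mem_nhds (half_lt_self ht))).continuousWithinAt

end MultipleSeries

section LeadingTerm

variable {k : ℕ} (α : Fin (k + 1) → ℝ) (p : Fin (k + 1))

/-- The constant `Γ(α p) * ∏_{j ≠ p} ζ(α p - α j + 1)`, the coefficient of `t ^ (-α p)` in
`Zr (k + 1) α t` as `t → 0` when `α p` is the largest exponent. The indices `j ≠ p` are enumerated
by `p.succAbove`. -/
def ZrLeadingCoeff : ℝ :=
  Gamma (α p) * ∏ j, zetaR (α p - α (p.succAbove j) + 1)

/-- The weight of `d` in the sum over the summation variables other than the `p`-th. -/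
def ZrWeight (d : Fin k → ℕ+) : ℝ :=
  ∏ j, ((d j : ℕ) : ℝ) ^ (-(α p - α (p.succAbove j) + 1))

lemma ZrWeight_mul_rpow (d : Fin k → ℕ+) :
    ZrWeight α p d * (∏ j, ((d j : ℕ) : ℝ)) ^ α p =
      ∏ j, ((d j : ℕ) : ℝ) ^ (α (p.succAbove j) - 1) := by
  rw [ZrWeight, ← finsetProd_rpow _ _ fun j _ => by positivity, ← Finset.prod_mul_distrib]
  refine Finset.prod_congr rfl fun j _ => ?_
  rw [← rpow_add (by exact_mod_cast (d j).pos)]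
  ring_nf

lemma rpow_mul_ZrTerm_insertNth {t : ℝ} (ht : 0 < t) (n : ℕ+) (d : Fin k → ℕ+) :
    t ^ α p * ZrTerm α t (p.insertNth n d) =
      ZrWeight α p d * ((∏ j, ((d j : ℕ) : ℝ)) * t *
        eulerIntegrand (α p) ((∏ j, ((d j : ℕ) : ℝ)) * t * (n : ℕ))) := by
  have hP : 0 < ∏ j, ((d j : ℕ) : ℝ) := Finset.prod_pos fun j _ => by exact_mod_cast (d j).pos
  set P := ∏ j, ((d j : ℕ) : ℝ) with hP_def
  have hpow : P * t * (P * t * (n : ℕ)) ^ (α p - 1) =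
      P ^ α p * t ^ α p * ((n : ℕ) : ℝ) ^ (α p - 1) := by
    rw [mul_rpow (by positivity) (by positivity), ← mul_assoc, ← mul_rpow hP.le ht.le]
    congr 1
    rw [mul_comm, rpow_sub_one (by positivity), div_mul_cancel₀ _ (by positivity)]
  have hexp : -((n : ℕ) * P) * t = -(P * t * (n : ℕ)) := by ring
  simp only [ZrTerm, Fin.prod_univ_succAbove _ p, Fin.insertNth_apply_same,
    Fin.insertNth_apply_succAbove, ← hP_def, ← ZrWeight_mul_rpow, hexp, eulerIntegrand]
  linear_combination -ZrWeight α p d * exp (-(P * t * (n : ℕ))) * hpow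

lemma rpow_mul_Zr_eq_tsum {t : ℝ} (ht : 0 < t) :
    t ^ α p * Zr (k + 1) α t = ∑' d, ZrWeight α p d *
      rightRiemannSum (eulerIntegrand (α p)) ((∏ j, ((d j : ℕ) : ℝ)) * t) := by
  let splitIndex : (Fin k → ℕ+) × ℕ+ ≃ (Fin (k + 1) → ℕ+) :=
    (Equiv.prodComm _ _).trans (Fin.insertNthEquiv (fun _ => ℕ+) p)
  have hsum : Summable fun x => ZrTerm α t (splitIndex x) :=
    splitIndex.summable_iff.2 (summable_ZrTerm α ht)
  calc t ^ α p * Zr (k + 1) α t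
      = t ^ α p * ∑' d, ∑' n, ZrTerm α t (p.insertNth n d) := by
        rw [show Zr (k + 1) α t = ∑' δ, ZrTerm α t δ from rfl, ← splitIndex.tsum_eq, hsum.tsum_prod]
        rfl
    _ = _ := by
        simp only [← tsum_mul_left, rpow_mul_ZrTerm_insertNth α p ht, rightRiemannSum, smul_eq_mul]

variable {α p}

lemma hasSum_ZrWeight (hα : ∀ j, α (p.succAbove j) < α p) :
    HasSum (ZrWeight α p) (∏ j, zetaR (α p - α (p.succAbove j) + 1)) :=
  hasSum_prod_rpow_neg fun j => by linarith [hα j]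

lemma ZrLeadingCoeff_pos (hp : 0 < α p) (hα : ∀ j, α (p.succAbove j) < α p) :
    0 < ZrLeadingCoeff α p :=
  mul_pos (Gamma_pos_of_pos hp) <| Finset.prod_pos fun j _ => zetaR_pos (by linarith [hα j])

lemma tendsto_rpow_mul_Zr (hp : 0 < α p) (hα : ∀ j, α (p.succAbove j) < α p) :
    Tendsto (fun t => t ^ α p * Zr (k + 1) α t) (𝓝[>] 0) (𝓝 (ZrLeadingCoeff α p)) := by
  obtain ⟨M, hM⟩ := exists_norm_rightRiemannSum_eulerIntegrand_le hp
  have hP (d : Fin k → ℕ+) : 0 < ∏ j, ((d j : ℕ) : ℝ) :=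
    Finset.prod_pos fun j _ => by exact_mod_cast (d j).pos
  have hcoeff : ZrLeadingCoeff α p = ∑' d, ZrWeight α p d * Gamma (α p) := by
    rw [tsum_mul_right, (hasSum_ZrWeight hα).tsum_eq, mul_comm, ZrLeadingCoeff]
  have hlim : Tendsto (fun t => ∑' d, ZrWeight α p d *
      rightRiemannSum (eulerIntegrand (α p)) ((∏ j, ((d j : ℕ) : ℝ)) * t)) (𝓝[>] 0)
      (𝓝 (ZrLeadingCoeff α p)) := by
    rw [hcoeff]
    refine tendsto_tsum_of_dominated_convergence
      ((hasSum_ZrWeight hα).summable.norm.mul_right M) (fun d => ?_) ?_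
    · have hscale : Tendsto (fun t => (∏ j, ((d j : ℕ) : ℝ)) * t) (𝓝[>] 0) (𝓝[>] 0) := by
        simpa using TendstoNhdsWithinIoi.const_mul (c := 0) (hP d) tendsto_id
      exact ((tendsto_rightRiemannSum_eulerIntegrand hp).comp hscale).const_mul _
    · filter_upwards [self_mem_nhdsWithin] with t (ht : 0 < t) d
      rw [norm_mul]
      gcongr
      exact hM _ (mul_pos (hP d) ht)
  refine hlim.congr' ?_
  filter_upwards [self_mem_nhdsWithin] with t ht
  exact (rpow_mul_Zr_eq_tsum α p ht).symm

end LeadingTerm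

section AsymptoticInverse

variable {f : ℝ → ℝ} {a K : ℝ}

lemma tendsto_atTop_of_tendsto_rpow_mul (ha : 0 < a) (hK : 0 < K)
    (hlim : Tendsto (fun t => t ^ a * f t) (𝓝[>] 0) (𝓝 K)) : Tendsto f (𝓝[>] 0) atTop := by
  have hinv : Tendsto (fun t : ℝ => t⁻¹ ^ a) (𝓝[>] 0) atTop :=
    (tendsto_rpow_atTop ha).comp tendsto_inv_nhdsGT_zero
  refine (hlim.pos_mul_atTop hK hinv).congr' ?_
  filter_upwards [self_mem_nhdsWithin] with t (ht : 0 < t)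
  rw [inv_rpow ht.le, mul_right_comm, mul_inv_cancel₀ (by positivity), one_mul]

lemma eventually_mem_image_Ioi (hcont : ContinuousOn f (Set.Ioi 0))
    (hf : Tendsto f (𝓝[>] 0) atTop) : ∀ᶠ u in atTop, u ∈ f '' Set.Ioi 0 :=
  mem_of_superset (Ici_mem_atTop (f 1)) <| isPreconnected_Ioi.intermediate_value_Ici
    (l := 𝓝[>] 0) (Set.mem_Ioi.2 one_pos) inf_le_right hcont hf

lemma tendsto_invFunOn_nhdsGT_zero (hanti : AntitoneOn f (Set.Ioi 0))
    (himage : ∀ᶠ u in atTop, u ∈ f '' Set.Ioi 0) :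
    Tendsto (Function.invFunOn f (Set.Ioi 0)) atTop (𝓝[>] 0) := by
  have hpos : ∀ᶠ u in atTop, 0 < Function.invFunOn f (Set.Ioi 0) u :=
    himage.mono fun u hu => Function.invFunOn_mem hu
  refine tendsto_nhdsWithin_iff.2 ⟨tendsto_order.2 ⟨fun b hb => ?_, fun b hb => ?_⟩, hpos⟩
  · exact hpos.mono fun u hu => hb.trans hu
  · filter_upwards [himage, eventually_gt_atTop (f b)] with u hu hbu
    by_contra! hle
    have := hanti hb (Function.invFunOn_mem hu) hle
    rw [Function.invFunOn_eq hu] at this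
    exact this.not_gt hbu

theorem tendsto_invFunOn_div_rpow (ha : 0 < a) (hK : 0 < K) (hanti : AntitoneOn f (Set.Ioi 0))
    (hcont : ContinuousOn f (Set.Ioi 0))
    (hlim : Tendsto (fun t => t ^ a * f t) (𝓝[>] 0) (𝓝 K)) :
    Tendsto (fun u => Function.invFunOn f (Set.Ioi 0) u / (u / K) ^ (-1 / a)) atTop (𝓝 1) := by
  have himage := eventually_mem_image_Ioi hcont (tendsto_atTop_of_tendsto_rpow_mul ha hK hlim)
  have hroot : Tendsto (fun u => (Function.invFunOn f (Set.Ioi 0) u ^ a *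
      f (Function.invFunOn f (Set.Ioi 0) u) / K) ^ (1 / a)) atTop (𝓝 1) := by
    have := ((hlim.comp (tendsto_invFunOn_nhdsGT_zero hanti himage)).div_const K).rpow_const
      (p := 1 / a) (.inr (by positivity))
    rwa [div_self hK.ne', one_rpow] at this
  refine hroot.congr' ?_
  filter_upwards [himage, eventually_gt_atTop 0] with u hu hu_pos
  have ht : 0 < Function.invFunOn f (Set.Ioi 0) u := Function.invFunOn_mem hu
  rw [Function.invFunOn_eq hu, mul_div_assoc, mul_rpow (by positivity) (by positivity), one_div,
    rpow_rpow_inv ht.le ha.ne', neg_div, one_div, rpow_neg (by positivity), div_inv_eq_mul]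

end AsymptoticInverse

lemma ZstairInv_eq_invFunOn_Zr (ℓ : ℕ) :
    ZstairInv ℓ = Function.invFunOn (Zr ℓ fun i => (ℓ : ℝ) - (i : ℕ)) (Set.Ioi 0) := by
  have hZ : Zstair ℓ ℓ = Zr ℓ fun i => (ℓ : ℝ) - (i : ℕ) := by
    ext t
    rw [Zstair, Int.cast_natCast]
  ext u
  rw [ZstairInv, hZ]

lemma ZrLeadingCoeff_staircase (k : ℕ) :
    ZrLeadingCoeff (fun i : Fin (k + 1) => ((k + 1 : ℕ) : ℝ) - (i : ℕ)) 0 =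
      Kconst (k + 1) := by
  have hprod : ∏ j ∈ Finset.Icc 2 (k + 1), zetaR j = ∏ j : Fin k, zetaR ((j + 2 : ℕ) : ℝ) := by
    rw [Fin.prod_univ_eq_prod_range (fun j : ℕ => zetaR ((j + 2 : ℕ) : ℝ)),
      Finset.range_eq_Ico, Finset.prod_Ico_add' (fun j : ℕ => zetaR (j : ℝ))]
    rfl
  rw [ZrLeadingCoeff, Kconst, hprod, Nat.add_sub_cancel, ← Gamma_nat_eq_factorial]
  congr 1
  · simp
  · refine Finset.prod_congr rfl fun j _ => congrArg zetaR ?_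
    push_cast [Fin.succAbove_zero, Fin.val_succ, Fin.val_zero]
    ring

theorem ZstairInv_asymptotic_general {k : ℕ} {α : Fin (k + 1) → ℝ} {p : Fin (k + 1)}
    (hp : 0 < α p) (hα : ∀ j, α (p.succAbove j) < α p) :
    Tendsto (fun u => Function.invFunOn (Zr (k + 1) α) (Set.Ioi 0) u /
      (u / ZrLeadingCoeff α p) ^ (-1 / α p)) atTop (𝓝 1) :=
  tendsto_invFunOn_div_rpow hp (ZrLeadingCoeff_pos hp hα) (antitoneOn_Zr α) (continuousOn_Zr α)
    (tendsto_rpow_mul_Zr hp hα)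

end

/-- `(Z_ℓ^{[ℓ]})^{-1}(u) ~ (u/K_ℓ)^{-1/ℓ}` as `u → ∞`. -/
theorem ZstairInv_asymptotic (ℓ : ℕ) (hℓ : 2 ≤ ℓ) :
    Tendsto (fun u : ℝ => ZstairInv ℓ u / (u / Kconst ℓ) ^ (-(1 : ℝ) / (ℓ : ℝ)))
      atTop (nhds 1) := by
  obtain ⟨k, rfl⟩ := Nat.exists_eq_add_of_le' (one_le_two.trans hℓ)
  have hasymp := ZstairInv_asymptotic_general (p := 0)
    (α := fun i : Fin (k + 1) => ((k + 1 : ℕ) : ℝ) - (i : ℕ))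
    (sub_pos.2 (Nat.cast_lt.2 k.succ_pos)) fun j => sub_lt_sub_left (Nat.cast_lt.2 j.succ_pos) _
  simpa only [ZstairInv_eq_invFunOn_Zr, ZrLeadingCoeff_staircase, Fin.val_zero, Nat.cast_zero,
    sub_zero] using hasymp
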